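/- Consider the networked control causal factorization over a horizon T with finite alphabets. Then the mutual information between the disclosed variables and the private input sequence decomposes as I(S^T, U^T; Y^T) = Σ_{t=2}^T I(S_t; Y^{t-1} | S^{t-1}, U^{t-1}). -/

import Mathlib

open scoped BigOperators Classical

noncomputable section

namespace NCS

/-- Probability of an event under a pmf `P` on a finite sample space. -/
def pr {Ω : Type} [Fintype Ω] (P : Ω → ℝ) (E : Ω → Prop) : ℝ :=
  ∑ ω, if E ω then P ω else 0

/-- Conditional probability `P(E | F)`, as a ratio of probabilities. -/
def condPr {Ω : Type} [Fintype Ω] (P : Ω → ℝ) (E F : Ω → Prop) : ℝ :=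
  pr P (fun ω => E ω ∧ F ω) / pr P F

/-- Mutual information `I(f ; g)` between two finitely-valued random variables
`f` and `g` defined on a finite sample space with pmf `P` (natural logarithm;
summands with zero probability vanish since `0 * log _ = 0`). -/
def MI {Ω A B : Type} [Fintype Ω] [Fintype A] [Fintype B]
    (P : Ω → ℝ) (f : Ω → A) (g : Ω → B) : ℝ :=
  ∑ a : A, ∑ b : B,
    pr P (fun ω => f ω = a ∧ g ω = b) *
      Real.log (pr P (fun ω => f ω = a ∧ g ω = b) /
        (pr P (fun ω => f ω = a) * pr P (fun ω => g ω = b)))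

/-- Conditional mutual information `I(f ; g | h)`. -/
def condMI {Ω A B C : Type} [Fintype Ω] [Fintype A] [Fintype B] [Fintype C]
    (P : Ω → ℝ) (f : Ω → A) (g : Ω → B) (h : Ω → C) : ℝ :=
  ∑ a : A, ∑ b : B, ∑ c : C,
    pr P (fun ω => f ω = a ∧ g ω = b ∧ h ω = c) *
      Real.log (condPr P (fun ω => f ω = a ∧ g ω = b) (fun ω => h ω = c) /
        (condPr P (fun ω => f ω = a) (fun ω => h ω = c) *
          condPr P (fun ω => g ω = b) (fun ω => h ω = c)))


/-! ### The networked control causal factorization -/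

variable {T : ℕ} {X Y Z S U : Type}

/-- The strict history `a^{t-1} = (a_1, …, a_{t-1})` of a trajectory (0-indexed). -/
def hist {A : Type} (f : Fin T → A) (t : Fin T) : Fin t.1 → A :=
  fun i => f ⟨i.1, lt_trans i.2 t.2⟩

/-- The inclusive history `a^t = (a_1, …, a_t)` of a trajectory (0-indexed). -/
def histIncl {A : Type} (f : Fin T → A) (t : Fin T) : Fin (t.1 + 1) → A :=
  fun i => f ⟨i.1, lt_of_le_of_lt (Nat.lt_succ_iff.mp i.2) t.2⟩

/-- Drop the last entry of a history. -/
def trunc {A : Type} {n : ℕ} (f : Fin (n + 1) → A) : Fin n → A :=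
  fun i => f ⟨i.1, Nat.lt_succ_of_lt i.2⟩

/-- The previous value `a_{t-1}`, or `none` at the initial time (vacuous conditioning). -/
def prevO {A : Type} (f : Fin T → A) (t : Fin T) : Option A :=
  if t.1 = 0 then none
  else some (f ⟨t.1 - 1, lt_of_le_of_lt (Nat.sub_le _ _) t.2⟩)

/-- The previous triple `(x_{t-1}, y_{t-1}, u_{t-1})`, or `none` at the initial time. -/
def prev3 (x : Fin T → X) (y : Fin T → Y) (u : Fin T → U) (t : Fin T) :
    Option (X × Y × U) :=
  if t.1 = 0 then none
  else some (x ⟨t.1 - 1, lt_of_le_of_lt (Nat.sub_le _ _) t.2⟩,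
             y ⟨t.1 - 1, lt_of_le_of_lt (Nat.sub_le _ _) t.2⟩,
             u ⟨t.1 - 1, lt_of_le_of_lt (Nat.sub_le _ _) t.2⟩)

/-- The fixed conditional pmfs (kernels) `P_Y(y_t | y_{t-1})`,
`P_X(x_t | x_{t-1}, y_{t-1}, u_{t-1})`, `P_Z(z_t | x_t)`; conditioning on `none`
encodes the vacuous conditioning at `t = 1`. -/
structure Kernels (X Y Z U : Type) [Fintype X] [Fintype Y] [Fintype Z] [Fintype U] where
  PY : Option Y → Y → ℝ
  PX : Option (X × Y × U) → X → ℝ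
  PZ : X → Z → ℝ
  PY_nonneg : ∀ p y, 0 ≤ PY p y
  PY_sum : ∀ p, ∑ y, PY p y = 1
  PX_nonneg : ∀ p x, 0 ≤ PX p x
  PX_sum : ∀ p, ∑ x, PX p x = 1
  PZ_nonneg : ∀ x z, 0 ≤ PZ x z
  PZ_sum : ∀ x, ∑ z, PZ x z = 1

/-- A quantizer policy family `π^e_t(s_t | z^t, s^{t-1}, u^{t-1})`. -/
def QPol (T : ℕ) (Z S U : Type) : Type :=
  (t : Fin T) → (Fin (t.1 + 1) → Z) → (Fin t.1 → S) → (Fin t.1 → U) → S → ℝ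

/-- A controller policy family `π^c_t(u_t | s^t, u^{t-1})`. -/
def CPol (T : ℕ) (S U : Type) : Type :=
  (t : Fin T) → (Fin (t.1 + 1) → S) → (Fin t.1 → U) → U → ℝ

/-- `π^e` is a family of conditional pmfs. -/
def IsQPol [Fintype S] (πe : QPol T Z S U) : Prop :=
  (∀ t zs ss us st, 0 ≤ πe t zs ss us st) ∧ (∀ t zs ss us, ∑ st, πe t zs ss us st = 1)

/-- `π^c` is a family of conditional pmfs. -/
def IsCPol [Fintype U] (πc : CPol T S U) : Prop :=
  (∀ t ss us ut, 0 ≤ πc t ss us ut) ∧ (∀ t ss us, ∑ ut, πc t ss us ut = 1)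

/-- The sample space of full trajectories `(x^T, y^T, z^T, s^T, u^T)`. -/
abbrev Traj (T : ℕ) (X Y Z S U : Type) : Type :=
  (Fin T → X) × (Fin T → Y) × (Fin T → Z) × (Fin T → S) × (Fin T → U)

def trX (ω : Traj T X Y Z S U) : Fin T → X := ω.1
def trY (ω : Traj T X Y Z S U) : Fin T → Y := ω.2.1
def trZ (ω : Traj T X Y Z S U) : Fin T → Z := ω.2.2.1
def trS (ω : Traj T X Y Z S U) : Fin T → S := ω.2.2.2.1
def trU (ω : Traj T X Y Z S U) : Fin T → U := ω.2.2.2.2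

variable [Fintype X] [Fintype Y] [Fintype Z] [Fintype S] [Fintype U]

/-- The joint pmf of the networked control causal factorization:
`P(x^T, y^T, z^T, s^T, u^T) = ∏_t P_Y(y_t|y_{t-1}) P_X(x_t|x_{t-1},y_{t-1},u_{t-1})
P_Z(z_t|x_t) π^e_t(s_t|z^t,s^{t-1},u^{t-1}) π^c_t(u_t|s^t,u^{t-1})`. -/
def joint (K : Kernels X Y Z U) (πe : QPol T Z S U) (πc : CPol T S U) :
    Traj T X Y Z S U → ℝ :=
  fun (x, y, z, s, u) =>
    ∏ t : Fin T,
      K.PY (prevO y t) (y t) *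
      K.PX (prev3 x y u t) (x t) *
      K.PZ (x t) (z t) *
      πe t (histIncl z t) (hist s t) (hist u t) (s t) *
      πc t (histIncl s t) (hist u t) (u t)


section aux
variable {Ω Ω' A A' B B' C : Type} [Fintype Ω] [Fintype Ω']

theorem pr_sum [Fintype A] (P : Ω → ℝ) (f : Ω → A) (φ : A → ℝ) :
    ∑ a, pr P (fun ω => f ω = a) * φ a = ∑ ω, P ω * φ (f ω) := by
  unfold pr
  simp_rw [Finset.sum_mul]
  rw [Finset.sum_comm]
  refine Finset.sum_congr rfl fun ω _ => ?_
  simp [ite_mul]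

theorem MI_eq [Fintype A] [Fintype B] (P : Ω → ℝ) (f : Ω → A) (g : Ω → B) :
    MI P f g = ∑ ω, P ω *
      Real.log (pr P (fun x => f x = f ω ∧ g x = g ω) /
        (pr P (fun x => f x = f ω) * pr P (fun x => g x = g ω))) := by
  have := pr_sum P (fun ω => (f ω, g ω)) (fun p => Real.log (pr P (fun x => f x = p.1 ∧ g x = p.2) /
        (pr P (fun x => f x = p.1) * pr P (fun x => g x = p.2))))
  rw [← this, Fintype.sum_prod_type]
  simp only [MI, Prod.mk.injEq]

theorem condMI_eq [Fintype A] [Fintype B] [Fintype C] (P : Ω → ℝ) (f : Ω → A) (g : Ω → B)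
    (h : Ω → C) :
    condMI P f g h = ∑ ω, P ω *
      Real.log (pr P (fun x => f x = f ω ∧ g x = g ω ∧ h x = h ω) / pr P (fun x => h x = h ω) /
        (pr P (fun x => f x = f ω ∧ h x = h ω) / pr P (fun x => h x = h ω) *
         (pr P (fun x => g x = g ω ∧ h x = h ω) / pr P (fun x => h x = h ω)))) := by
  have := pr_sum P (fun ω => (f ω, g ω, h ω)) (fun p => Real.log
     (pr P (fun x => f x = p.1 ∧ g x = p.2.1 ∧ h x = p.2.2) / pr P (fun x => h x = p.2.2) /
        (pr P (fun x => f x = p.1 ∧ h x = p.2.2) / pr P (fun x => h x = p.2.2) *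
         (pr P (fun x => g x = p.2.1 ∧ h x = p.2.2) / pr P (fun x => h x = p.2.2)))))
  rw [← this, Fintype.sum_prod_type]
  simp only [condMI, condPr, Prod.mk.injEq, Fintype.sum_prod_type (α₁ := B), and_assoc]

theorem pr_equiv (e : Ω' ≃ Ω) (P : Ω → ℝ) (E : Ω → Prop) :
    pr P E = pr (fun x => P (e x)) (fun x => E (e x)) := by
  unfold pr
  exact (Equiv.sum_comp e (fun ω => if E ω then P ω else 0)).symm

theorem MI_equiv [Fintype A] [Fintype B] [Fintype A'] [Fintype B']
    (e : Ω' ≃ Ω) (P : Ω → ℝ) (f : Ω → A) (g : Ω → B)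
    (f' : Ω' → A') (g' : Ω' → B')
    (hf : ∀ x y, f (e x) = f (e y) ↔ f' x = f' y) (hg : ∀ x y, g (e x) = g (e y) ↔ g' x = g' y) :
    MI P f g = MI (fun x => P (e x)) f' g' := by
  rw [MI_eq, MI_eq, ← Equiv.sum_comp e]
  simp_rw [pr_equiv e, hf, hg]

theorem condMI_equiv [Fintype A] [Fintype B] [Fintype C] 
    (e : Ω' ≃ Ω) (P : Ω → ℝ) (f : Ω → A) (g : Ω → B) (h : Ω → C) :
    condMI P f g h =
      condMI (fun x => P (e x)) (fun x => f (e x)) (fun x => g (e x)) (fun x => h (e x)) := by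
  rw [condMI_eq, condMI_eq, ← Equiv.sum_comp e]
  simp_rw [pr_equiv e]

theorem condMI_proj [Fintype A] [Fintype B] [Fintype C] {N : Type} [Fintype N]
    (P' : Ω × N → ℝ) (P : Ω → ℝ) (hP : ∀ ω, ∑ n, P' (ω, n) = P ω)
    (f : Ω → A) (g : Ω → B) (h : Ω → C) :
    condMI P' (fun x => f x.1) (fun x => g x.1) (fun x => h x.1) = condMI P f g h := by
  have key : ∀ E : Ω → Prop, pr P' (fun x => E x.1) = pr P E := by
    intro E
    unfold pr
    rw [Fintype.sum_prod_type]
    refine Finset.sum_congr rfl fun ω _ => ?_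
    by_cases hE : E ω <;> simp [hE, hP]
  have k1 : ∀ a b c, pr P' (fun x => f x.1 = a ∧ g x.1 = b ∧ h x.1 = c) = _ :=
    fun a b c => key (fun x => f x = a ∧ g x = b ∧ h x = c)
  have k2 : ∀ a b c, pr P' (fun x => (f x.1 = a ∧ g x.1 = b) ∧ h x.1 = c) = _ :=
    fun a b c => key (fun x => (f x = a ∧ g x = b) ∧ h x = c)
  have k3 : ∀ a c, pr P' (fun x => f x.1 = a ∧ h x.1 = c) = _ :=
    fun a c => key (fun x => f x = a ∧ h x = c)
  have k4 : ∀ a c, pr P' (fun x => g x.1 = a ∧ h x.1 = c) = _ :=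
    fun a c => key (fun x => g x = a ∧ h x = c)
  have k5 : ∀ c, pr P' (fun x => h x.1 = c) = _ :=
    fun c => key (fun x => h x = c)
  simp only [condMI, condPr, k1, k2, k3, k4, k5]

theorem pr_pos (P : Ω → ℝ) (hP : ∀ ω, 0 ≤ P ω) (E : Ω → Prop) (ω : Ω) (h : 0 < P ω) (hE : E ω) :
    0 < pr P E := by
  unfold pr
  refine Finset.sum_pos' (fun i _ => ?_) ⟨ω, Finset.mem_univ _, by simpa [hE] using h⟩
  split_ifs
  · exact hP i
  · exact le_rfl

theorem condMI_zero [Fintype A] [Fintype B] [Fintype C] [Subsingleton B] (P : Ω → ℝ)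
    (hP : ∀ ω, 0 ≤ P ω) (f : Ω → A) (g : Ω → B) (h : Ω → C) : condMI P f g h = 0 := by
  rw [condMI_eq]
  refine Finset.sum_eq_zero fun ω _ => ?_
  rcases (hP ω).eq_or_lt with h0 | h0
  · simp [← h0]
  have hg : ∀ x, (g x = g ω) = True := fun x => by simp [Subsingleton.elim (g x) (g ω)]
  simp only [hg, true_and]
  have h1 := pr_pos P hP (fun x => h x = h ω) ω h0 rfl
  have h2 := pr_pos P hP (fun x => f x = f ω ∧ h x = h ω) ω h0 ⟨rfl, rfl⟩
  rw [div_self h1.ne', mul_one, div_self (by positivity)]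
  simp

/-- One step of the recursion, abstractly. -/
theorem step {W Y S U : Type} [Fintype W] [Fintype Y] [Fintype S] [Fintype U]
    [Fintype A] [Fintype B]
    (P : Ω → ℝ) (hP : ∀ ω, 0 ≤ P ω) (f : Ω → A) (g : Ω → B)
    (p : B → Y → ℝ) (hp : ∀ b y, 0 ≤ p b y) (hp1 : ∀ b, ∑ y, p b y = 1)
    (G : Ω → W → S → ℝ) (hG : ∀ ω w s, 0 ≤ G ω w s) (hG1 : ∀ ω, ∑ w, ∑ s, G ω w s = 1)
    (c : A → S → U → ℝ) (hc : ∀ a s u, 0 ≤ c a s u) (hc1 : ∀ a s, ∑ u, c a s u = 1)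
    (P' : Ω × W × Y × S × U → ℝ)
    (hP' : ∀ ω w y s u, P' (ω, w, y, s, u) = P ω * p (g ω) y * G ω w s * c (f ω) s u) :
    (∀ ω, ∑ n, P' (ω, n) = P ω) ∧
    MI P' (fun x => (f x.1, x.2.2.2.1, x.2.2.2.2)) (fun x => (g x.1, x.2.2.1)) =
      MI P f g + condMI P' (fun x => x.2.2.2.1) (fun x => g x.1) (fun x => f x.1) := by
  have hP'0 : ∀ x, 0 ≤ P' x := by
    rintro ⟨ω, w, y, s, u⟩
    rw [hP']
    have := hP ω; have := hp (g ω) y; have := hG ω w s; have := hc (f ω) s u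
    positivity
  have marg : ∀ ω, ∑ n, P' (ω, n) = P ω := by
    intro ω
    simp only [Fintype.sum_prod_type, hP', ← Finset.mul_sum, hc1, mul_one]
    simp only [mul_assoc, ← Finset.mul_sum, ← Finset.sum_mul, hp1, hG1, mul_one, one_mul]
  have prm : ∀ E : Ω → Prop, pr P' (fun x => E x.1) = pr P E := by
    intro E
    unfold pr
    rw [Fintype.sum_prod_type]
    refine Finset.sum_congr rfl fun ω _ => ?_
    by_cases hE : E ω <;> simp [hE, marg]
  -- master marginals
  set R : (Ω → Prop) → S → ℝ := fun E s => ∑ ω, if E ω then P ω * ∑ w, G ω w s else 0 with hR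
  have prR : ∀ (E : Ω → Prop) s, pr P' (fun x => x.2.2.2.1 = s ∧ E x.1) = R E s := by
    intro E s
    simp only [hR, pr, Fintype.sum_prod_type, hP']
    refine Finset.sum_congr rfl fun ω _ => ?_
    by_cases hE : E ω
    · simp only [hE, and_true, if_true, Finset.mul_sum]
      refine Finset.sum_congr rfl fun w _ => ?_
      have : ∀ y s', (∑ u, if s' = s then P ω * p (g ω) y * G ω w s' * c (f ω) s' u else 0) =
          if s' = s then P ω * p (g ω) y * G ω w s' else 0 := by
        intro y s'
        split_ifs
        · rw [← Finset.mul_sum, hc1, mul_one]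
        · simp
      simp only [this, Finset.sum_ite_eq', Finset.sum_ite_eq, Finset.mem_univ, if_true]
      rw [← Finset.sum_mul, ← Finset.mul_sum, hp1, mul_one]
    · simp [hE]
  have prA : ∀ a b y s u, pr P' (fun x => (f x.1, x.2.2.2.1, x.2.2.2.2) = (a, s, u) ∧
      (g x.1, x.2.2.1) = (b, y)) = p b y * c a s u * R (fun ω => g ω = b ∧ f ω = a) s := by
    intro a b y s u
    simp only [hR, pr, Fintype.sum_prod_type, hP', Prod.mk.injEq]
    rw [Finset.mul_sum]
    refine Finset.sum_congr rfl fun ω _ => ?_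
    by_cases hE : g ω = b ∧ f ω = a
    · obtain ⟨rfl, rfl⟩ := hE
      simp only [true_and, and_true, if_true, Finset.mul_sum, and_self]
      refine Finset.sum_congr rfl fun w _ => ?_
      rw [Finset.sum_eq_single y (by intros; simp_all) (by simp),
        Finset.sum_eq_single s (by intros; simp_all) (by simp),
        Finset.sum_eq_single u (by intros; simp_all) (by simp)]
      simp
      ring
    · have : ∀ y' s' u', ¬ ((f ω = a ∧ s' = s ∧ u' = u) ∧ g ω = b ∧ y' = y) := by tauto
      simp [hE, this]
  have prC : ∀ a s u, pr P' (fun x => (f x.1, x.2.2.2.1, x.2.2.2.2) = (a, s, u)) =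
      c a s u * R (fun ω => f ω = a) s := by
    intro a s u
    simp only [hR, pr, Fintype.sum_prod_type, hP', Prod.mk.injEq]
    rw [Finset.mul_sum]
    refine Finset.sum_congr rfl fun ω _ => ?_
    by_cases hE : f ω = a
    · subst hE
      simp only [true_and, if_true, Finset.mul_sum]
      refine Finset.sum_congr rfl fun w _ => ?_
      have : ∀ y, (∑ s', ∑ u', if s' = s ∧ u' = u then
          P ω * p (g ω) y * G ω w s' * c (f ω) s' u' else 0) =
          P ω * p (g ω) y * G ω w s * c (f ω) s u := by
        intro y
        rw [Finset.sum_eq_single s (by intros; simp_all) (by simp),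
          Finset.sum_eq_single u (by intros; simp_all) (by simp)]
        simp
      simp only [this]
      rw [← Finset.sum_mul, ← Finset.sum_mul, ← Finset.mul_sum, hp1]
      ring
    · simp [hE]
  have prQ : ∀ b y, pr P' (fun x => (g x.1, x.2.2.1) = (b, y)) =
      p b y * pr P (fun ω => g ω = b) := by
    intro b y
    simp only [pr, Fintype.sum_prod_type, hP', Prod.mk.injEq]
    rw [Finset.mul_sum]
    refine Finset.sum_congr rfl fun ω _ => ?_
    by_cases hE : g ω = b
    · subst hE
      simp only [true_and, if_true]
      have : ∀ w y', (∑ s, ∑ u, if y' = y then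
          P ω * p (g ω) y' * G ω w s * c (f ω) s u else 0) =
          if y' = y then P ω * p (g ω) y' * ∑ s, G ω w s else 0 := by
        intro w y'
        split_ifs
        · simp only [← Finset.mul_sum, hc1, mul_one]
        · simp
      simp only [this, Finset.sum_ite_eq', Finset.sum_ite_eq, Finset.mem_univ, if_true]
      rw [← Finset.mul_sum, hG1]
      ring
    · simp [hE]
  refine ⟨marg, ?_⟩
  rw [MI_eq, MI_eq, condMI_eq]
  have lift : ∀ φ : Ω → ℝ, ∑ ω, P ω * φ ω = ∑ x, P' x * φ x.1 := by
    intro φ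
    rw [Fintype.sum_prod_type]
    refine Finset.sum_congr rfl fun ω _ => ?_
    simp only
    rw [← Finset.sum_mul, marg]
  rw [lift, ← Finset.sum_add_distrib]
  refine Finset.sum_congr rfl fun x _ => ?_
  rw [← mul_add]
  rcases (hP'0 x).eq_or_lt with h0 | h0
  · simp [← h0]
  congr 1
  obtain ⟨ω, w, y, s, u⟩ := x
  have hA := pr_pos P' hP'0 (fun x => (f x.1, x.2.2.2.1, x.2.2.2.2) = (f ω, s, u) ∧
      (g x.1, x.2.2.1) = (g ω, y)) _ h0 ⟨rfl, rfl⟩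
  have hC := pr_pos P' hP'0 (fun x => (f x.1, x.2.2.2.1, x.2.2.2.2) = (f ω, s, u)) _ h0 rfl
  have hQ := pr_pos P' hP'0 (fun x => (g x.1, x.2.2.1) = (g ω, y)) _ h0 rfl
  have ha := pr_pos P' hP'0 (fun x => g x.1 = g ω ∧ f x.1 = f ω) _ h0 ⟨rfl, rfl⟩
  have hcc := pr_pos P' hP'0 (fun x => f x.1 = f ω) _ h0 rfl
  have hE : (fun x => f x = f ω ∧ g x = g ω) = (fun x => g x = g ω ∧ f x = f ω) := by
    funext x; exact propext and_comm
  have e1 := prR (fun x => g x = g ω ∧ f x = f ω) s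
  have e2 := prR (fun x => f x = f ω) s
  have e3 := prm (fun x => g x = g ω ∧ f x = f ω)
  have e4 := prm (fun x => f x = f ω)
  simp only [hE]
  rw [e3] at ha
  rw [e4] at hcc
  rw [prA, prC, prQ, e1, e2, e3, e4]
  rw [prA] at hA
  rw [prC] at hC
  rw [prQ] at hQ
  have n1 := hA.ne'
  have n2 := hC.ne'
  have n3 := hQ.ne'
  simp only [mul_ne_zero_iff] at n1 n2 n3
  obtain ⟨⟨m1, m2⟩, m3⟩ := n1
  obtain ⟨_, m4⟩ := n2
  obtain ⟨_, m5⟩ := n3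
  have m6 := ha.ne'
  have m7 := hcc.ne'
  rw [← Real.log_mul (by positivity) (by positivity)]
  congr 1
  field_simp

end aux

section snoc

/-- Append one time step to a trajectory. -/
def snocTraj (T : ℕ) (X Y Z S U : Type) :
    Traj T X Y Z S U × (X × Z) × Y × S × U ≃ Traj (T + 1) X Y Z S U where
  toFun a := (Fin.snoc (α := fun _ => X) a.1.1 a.2.1.1, Fin.snoc (α := fun _ => Y) a.1.2.1 a.2.2.1,
    Fin.snoc (α := fun _ => Z) a.1.2.2.1 a.2.1.2, Fin.snoc (α := fun _ => S) a.1.2.2.2.1 a.2.2.2.1,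
    Fin.snoc (α := fun _ => U) a.1.2.2.2.2 a.2.2.2.2)
  invFun b := ((Fin.init b.1, Fin.init b.2.1, Fin.init b.2.2.1, Fin.init b.2.2.2.1,
      Fin.init b.2.2.2.2), (b.1 (Fin.last T), b.2.2.1 (Fin.last T)), b.2.1 (Fin.last T),
      b.2.2.2.1 (Fin.last T), b.2.2.2.2 (Fin.last T))
  left_inv a := by simp
  right_inv b := by simp

variable {A : Type}

theorem hist_snoc_last (f : Fin T → A) (a : A) :
    hist (Fin.snoc (α := fun _ => A) f a) (Fin.last T) = f := by
  funext i
  exact Fin.snoc_castSucc (α := fun _ => A) a f i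

theorem hist_snoc (f : Fin T → A) (a : A) (t : Fin T) :
    hist (Fin.snoc (α := fun _ => A) f a) t.castSucc = hist f t := by
  funext i
  exact Fin.snoc_castSucc (α := fun _ => A) a f ⟨i.1, lt_trans i.2 t.2⟩

theorem histIncl_snoc (f : Fin T → A) (a : A) (t : Fin T) :
    histIncl (Fin.snoc (α := fun _ => A) f a) t.castSucc = histIncl f t := by
  funext i
  exact Fin.snoc_castSucc (α := fun _ => A) a f ⟨i.1, lt_of_le_of_lt (Nat.lt_succ_iff.mp i.2) t.2⟩

theorem histIncl_last (f : Fin (T + 1) → A) : histIncl f (Fin.last T) = f := rfl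

theorem prevO_snoc (f : Fin T → A) (a : A) (t : Fin T) :
    prevO (Fin.snoc (α := fun _ => A) f a) t.castSucc = prevO f t := by
  have := Fin.snoc_castSucc (α := fun _ => A) a f ⟨t.1 - 1, lt_of_le_of_lt (Nat.sub_le _ _) t.2⟩
  unfold prevO
  exact if_congr Iff.rfl rfl (congrArg some this)

/-- Last value of a tuple, if any. -/
def lastO (f : Fin T → A) : Option A :=
  if h : T = 0 then none else some (f ⟨T - 1, Nat.sub_lt (Nat.pos_of_ne_zero h) one_pos⟩)

theorem prevO_snoc_last (f : Fin T → A) (a : A) :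
    prevO (Fin.snoc (α := fun _ => A) f a) (Fin.last T) = lastO f := by
  unfold prevO lastO
  by_cases h : T = 0
  · simp [h]
  · have := Fin.snoc_castSucc (α := fun _ => A) a f
      ⟨T - 1, Nat.sub_lt (Nat.pos_of_ne_zero h) one_pos⟩
    simp only [Fin.val_last, h, if_false, dif_neg, not_false_eq_true]
    exact congrArg some this

theorem prev3_eq {X Y U : Type} (x : Fin T → X) (y : Fin T → Y) (u : Fin T → U) (t : Fin T) :
    prev3 x y u t = prevO (fun i => (x i, y i, u i)) t := rfl

theorem snoc3 {X Y U : Type} (x : Fin T → X) (y : Fin T → Y) (u : Fin T → U) (x' y' u') :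
    (fun i => (Fin.snoc (α := fun _ => X) x x' i, Fin.snoc (α := fun _ => Y) y y' i,
      Fin.snoc (α := fun _ => U) u u' i)) =
    Fin.snoc (α := fun _ => X × Y × U) (fun i => (x i, y i, u i)) (x', y', u') := by
  funext i
  refine Fin.lastCases ?_ (fun i => ?_) i <;> simp

theorem joint_snoc {X Y Z S U : Type} [Fintype X] [Fintype Y] [Fintype Z] [Fintype S] [Fintype U]
    (K : Kernels X Y Z U) (πe : QPol (T + 1) Z S U) (πc : CPol (T + 1) S U)
    (ω : Traj T X Y Z S U) (w : X × Z) (y : Y) (s : S) (u : U) :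
    joint K πe πc (snocTraj T X Y Z S U (ω, w, y, s, u)) =
      joint K (fun t => πe t.castSucc) (fun t => πc t.castSucc) ω *
      K.PY (lastO (trY ω)) y *
      (K.PX (lastO (fun i => (trX ω i, trY ω i, trU ω i))) w.1 * K.PZ w.1 w.2 *
        πe (Fin.last T) (Fin.snoc (α := fun _ => Z) (trZ ω) w.2) (trS ω) (trU ω) s) *
      πc (Fin.last T) (Fin.snoc (α := fun _ => S) (trS ω) s) (trU ω) u := by
  obtain ⟨x₀, y₀, z₀, s₀, u₀⟩ := ω
  obtain ⟨x, z⟩ := w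
  simp only [joint, snocTraj, Equiv.coe_fn_mk, trX, trY, trZ, trS, trU]
  rw [Fin.prod_univ_castSucc]
  simp only [prev3_eq, snoc3, prevO_snoc, prevO_snoc_last, hist_snoc, histIncl_snoc,
    hist_snoc_last, histIncl_last, Fin.snoc_castSucc, Fin.snoc_last]
  ring

theorem joint_nonneg {X Y Z S U : Type} [Fintype X] [Fintype Y] [Fintype Z] [Fintype S] [Fintype U]
    (K : Kernels X Y Z U) (πe : QPol T Z S U) (πc : CPol T S U) (hπe : IsQPol πe)
    (hπc : IsCPol πc) (ω : Traj T X Y Z S U) : 0 ≤ joint K πe πc ω := by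
  obtain ⟨x, y, z, s, u⟩ := ω
  refine Finset.prod_nonneg fun t _ => ?_
  have h1 := K.PY_nonneg (prevO y t) (y t)
  have h2 := K.PX_nonneg (prev3 x y u t) (x t)
  have h3 := K.PZ_nonneg (x t) (z t)
  have h4 := hπe.1 t (histIncl z t) (hist s t) (hist u t) (s t)
  have h5 := hπc.1 t (histIncl s t) (hist u t) (u t)
  positivity

theorem snoc_iff (f g : Fin T → A) (a b : A) :
    Fin.snoc (α := fun _ => A) f a = Fin.snoc (α := fun _ => A) g b ↔ f = g ∧ a = b :=
  Fin.snoc_inj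

theorem MI_full {X Y Z S U : Type} [Fintype X] [Fintype Y] [Fintype Z] [Fintype S] [Fintype U]
    (K : Kernels X Y Z U) : ∀ (T : ℕ)
    (πe : QPol T Z S U) (πc : CPol T S U) (_ : IsQPol πe) (_ : IsCPol πc),
    MI (joint K πe πc) (fun ω => (trS ω, trU ω)) (fun ω => trY ω) =
      ∑ t : Fin T,
        condMI (joint K πe πc)
          (fun ω => trS ω t)
          (fun ω => hist (trY ω) t)
          (fun ω => (hist (trS ω) t, hist (trU ω) t)) := by
  intro T
  induction T with
  | zero =>
    intro πe πc _ _
    rw [MI_eq]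
    simp [pr, joint, eq_iff_true_of_subsingleton]
  | succ T ih =>
    intro πe πc he hc
    have he' : IsQPol (T := T) (Z := Z) (U := U) (fun t => πe t.castSucc) :=
      ⟨fun t => he.1 t.castSucc, fun t => he.2 t.castSucc⟩
    have hc' : IsCPol (T := T) (S := S) (fun t => πc t.castSucc) :=
      ⟨fun t => hc.1 t.castSucc, fun t => hc.2 t.castSucc⟩
    obtain ⟨hm, hs⟩ := step (joint K (fun t => πe t.castSucc) (fun t => πc t.castSucc))
      (joint_nonneg K _ _ he' hc') (fun ω : Traj T X Y Z S U => (trS ω, trU ω)) (fun ω => trY ω)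
      (fun b y => K.PY (lastO b) y) (fun _ _ => K.PY_nonneg _ _) (fun _ => K.PY_sum _)
      (fun ω (w : X × Z) s => K.PX (lastO (fun i => (trX ω i, trY ω i, trU ω i))) w.1 *
        K.PZ w.1 w.2 *
        πe (Fin.last T) (Fin.snoc (α := fun _ => Z) (trZ ω) w.2) (trS ω) (trU ω) s)
      (fun ω w s => mul_nonneg (mul_nonneg (K.PX_nonneg _ _) (K.PZ_nonneg _ _)) (he.1 _ _ _ _ _))
      (fun ω => by
        simp only [← Finset.mul_sum]
        have h1 : ∀ w : X × Z, ∑ s, πe (Fin.last T) (Fin.snoc (α := fun _ => Z) (trZ ω) w.2)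
          (trS ω) (trU ω) s = 1 := fun w => he.2 (Fin.last T) _ _ _
        simp only [h1, mul_one, Fintype.sum_prod_type, ← Finset.mul_sum, K.PZ_sum, K.PX_sum])
      (fun a s u => πc (Fin.last T) (Fin.snoc (α := fun _ => S) a.1 s) a.2 u)
      (fun a s u => hc.1 _ _ _ _) (fun a s => hc.2 (Fin.last T) _ _)
      (fun x => joint K πe πc (snocTraj T X Y Z S U x))
      (fun ω w y s u => joint_snoc K πe πc ω w y s u)
    rw [MI_equiv (snocTraj T X Y Z S U) (joint K πe πc) _ _
      (fun x => ((trS x.1, trU x.1), x.2.2.2.1, x.2.2.2.2)) (fun x => (trY x.1, x.2.2.1))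
      (by
        intro x y
        simp only [snocTraj, trS, trU, Equiv.coe_fn_mk, Prod.mk.injEq, snoc_iff]
        tauto)
      (by
        intro x y
        simp only [snocTraj, trY, Equiv.coe_fn_mk, Prod.mk.injEq, snoc_iff]), hs, ih _ _ he' hc',
      Fin.sum_univ_castSucc]
    refine congrArg₂ (· + ·) ?_ ?_
    · refine Finset.sum_congr rfl fun t _ => ?_
      rw [condMI_equiv (snocTraj T X Y Z S U) (joint K πe πc)]
      refine (condMI_proj (fun x => joint K πe πc (snocTraj T X Y Z S U x)) _ hm _ _ _).symm.trans ?_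
      have h1 : (fun x => trS (snocTraj T X Y Z S U x) t.castSucc) = fun x => trS x.1 t := by
        funext x
        exact Fin.snoc_castSucc (α := fun _ => S) _ _ t
      have h2 : (fun x => hist (trY (snocTraj T X Y Z S U x)) t.castSucc) =
          fun x => hist (trY x.1) t := by
        funext x
        exact hist_snoc _ _ t
      have h3 : (fun x => (hist (trS (snocTraj T X Y Z S U x)) t.castSucc,
          hist (trU (snocTraj T X Y Z S U x)) t.castSucc)) =
          fun x => (hist (trS x.1) t, hist (trU x.1) t) := by
        funext x
        exact Prod.ext (hist_snoc _ _ t) (hist_snoc _ _ t)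
      rw [h1, h2, h3]
    · rw [condMI_equiv (snocTraj T X Y Z S U) (joint K πe πc)]
      have h1 : (fun x => trS (snocTraj T X Y Z S U x) (Fin.last T)) = fun x => x.2.2.2.1 := by
        funext x
        exact Fin.snoc_last (α := fun _ => S) _ _
      have h2 : (fun x => hist (trY (snocTraj T X Y Z S U x)) (Fin.last T)) =
          fun x => trY x.1 := by
        funext x
        exact hist_snoc_last _ _
      have h3 : (fun x => (hist (trS (snocTraj T X Y Z S U x)) (Fin.last T),
          hist (trU (snocTraj T X Y Z S U x)) (Fin.last T))) =
          fun x => (trS x.1, trU x.1) := by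
        funext x
        exact Prod.ext (hist_snoc_last _ _) (hist_snoc_last _ _)
      rw [h1, h2, h3]

end snoc

/-- Chain-rule decomposition of the privacy leakage:
`I(S^T, U^T; Y^T) = ∑_{t=2}^T I(S_t ; Y^{t-1} | S^{t-1}, U^{t-1})`
(the sum below ranges over the 0-indexed times `t` with `t.1 ≠ 0`, i.e. over
the paper's times `t = 2, …, T`). -/
theorem mutual_information_decomposition
    [Nonempty X] [Nonempty Y] [Nonempty Z] [Nonempty S] [Nonempty U]
    (hT : 1 ≤ T) (K : Kernels X Y Z U)
    (πe : QPol T Z S U) (πc : CPol T S U) (hπe : IsQPol πe) (hπc : IsCPol πc) :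
    MI (joint K πe πc) (fun ω => (trS ω, trU ω)) (fun ω => trY ω) =
      ∑ t ∈ Finset.univ.filter (fun t : Fin T => t.1 ≠ 0),
        condMI (joint K πe πc)
          (fun ω => trS ω t)
          (fun ω => hist (trY ω) t)
          (fun ω => (hist (trS ω) t, hist (trU ω) t)) := by
  rw [MI_full K T πe πc hπe hπc, Finset.sum_filter]
  refine Finset.sum_congr rfl fun t _ => ?_
  split_ifs with h
  · rfl
  · have h0 : t.1 = 0 := not_not.mp h
    haveI : IsEmpty (Fin t.1) := by rw [h0]; infer_instance
    exact condMI_zero _ (joint_nonneg K πe πc hπe hπc) _ _ _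

end NCS
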